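/- Let B be a finite simplicial complex in some Euclidean space and let A be a nonempty subset of the set of simplices of B, each of dimension ≤ m. Let |A| denote the union of the open simplices int(σ) over all σ ∈ A. Then |A| is homotopy equivalent to a finite CW complex of dimension ≤ m. -/

import Mathlib

open Set Geometry

/-!
In barycentric coordinates on the standard simplex spanned by the vertices, `|A|` consists of the
points whose support belongs to `A`. In the barycentric subdivision the open simplices correspond to
the flags of faces, and such an open simplex lies in `|A|` exactly when the largest face of its flag
is in `A`. Discarding from each flag the faces outside `A` therefore pushes `|A|` onto the order
complex of `A`, and the straight-line homotopy stays inside `|A|` since the largest face of a flag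
survives. A chain of nonempty simplices with at most `m + 1` vertices has at most `m + 1` members,
so the order complex has dimension at most `m`.
-/

section Chains

variable {α : Type*}

theorem exists_isLeast_of_isChain [Preorder α] {c : Set α} (hc : IsChain (· ≤ ·) c)
    (hfin : c.Finite) (hne : c.Nonempty) : ∃ a, IsLeast c a := by
  obtain ⟨a, ha⟩ := hfin.exists_minimal hne
  exact ⟨a, ha.prop, fun b hb => (hc.total ha.prop hb).elim id (ha.le_of_le hb)⟩

theorem exists_isGreatest_of_isChain [Preorder α] {c : Set α} (hc : IsChain (· ≤ ·) c)
    (hfin : c.Finite) (hne : c.Nonempty) : ∃ a, IsGreatest c a :=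
  exists_isLeast_of_isChain (α := αᵒᵈ) hc.symm hfin hne

theorem card_le_of_isChain {c : Finset (Finset α)} {n : ℕ}
    (hc : IsChain (· ⊆ ·) (c : Set (Finset α))) (hne : ∀ s ∈ c, s.Nonempty)
    (hn : ∀ s ∈ c, s.card ≤ n) : c.card ≤ n := by
  have hinj : Set.InjOn Finset.card (c : Set (Finset α)) := fun s hs t ht hst =>
    (hc.total hs ht).elim (fun h => Finset.eq_of_subset_of_card_le h hst.ge)
      fun h => (Finset.eq_of_subset_of_card_le h hst.le).symm
  calc c.card ≤ (Finset.Icc 1 n).card :=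
        Finset.card_le_card_of_injOn Finset.card
          (fun s hs => Finset.mem_coe.2 <|
            Finset.mem_Icc.2 ⟨Finset.card_pos.2 (hne s hs), hn s hs⟩) hinj
    _ = n := by rw [Nat.card_Icc, Nat.add_sub_cancel]

/-- The order complex of the subposet `A` of `α`: its faces are the nonempty finite chains
in `A`. -/
def orderComplex [LE α] (A : Set α) : PreAbstractSimplicialComplex α where
  faces := {c | c.Nonempty ∧ (c : Set α) ⊆ A ∧ IsChain (· ≤ ·) (c : Set α)}
  isRelLowerSet_faces := fun _ ⟨hne, hA, hc⟩ =>
    ⟨hne, fun _ hd hdne => ⟨hdne, (Finset.coe_subset.2 hd).trans hA,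
      hc.mono (Finset.coe_subset.2 hd)⟩⟩

end Chains

theorem homotopic_of_segment_subset {X F : Type*} [TopologicalSpace X] [AddCommGroup F]
    [Module ℝ F] [TopologicalSpace F] [IsTopologicalAddGroup F] [ContinuousSMul ℝ F] {Y : Set F}
    (f g : C(X, Y)) (h : ∀ x, segment ℝ (f x : F) (g x) ⊆ Y) : f.Homotopic g :=
  ⟨{ toFun := fun p => ⟨AffineMap.lineMap (f p.2 : F) (g p.2 : F) (p.1 : ℝ),
        h p.2 <| segment_eq_image_lineMap ℝ (f p.2 : F) (g p.2) ▸ mem_image_of_mem _ p.1.2⟩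
     continuous_toFun := by
      simp only [AffineMap.lineMap_apply_module]
      fun_prop
     map_zero_left := fun x => by ext1; simp only [Icc.coe_zero, AffineMap.lineMap_apply_zero]
     map_one_left := fun x => by ext1; simp only [Icc.coe_one, AffineMap.lineMap_apply_one] }⟩

section Carrier

variable {V : Type*} [Fintype V]

/-- The carrier of a point given by its barycentric coordinates: the vertices with nonzero
coordinate. -/
noncomputable def carrier (w : V → ℝ) : Finset V :=
  (Function.support w).toFinite.toFinset

theorem mem_carrier {w : V → ℝ} {v : V} : v ∈ carrier w ↔ w v ≠ 0 := by
  rw [carrier, Finite.mem_toFinset, Function.mem_support]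

theorem notMem_carrier {w : V → ℝ} {v : V} : v ∉ carrier w ↔ w v = 0 := by
  rw [mem_carrier, not_not]

theorem carrier_nonempty {w : V → ℝ} (hw : w ∈ stdSimplex ℝ V) : (carrier w).Nonempty := by
  obtain ⟨v, -, hv⟩ := Finset.exists_ne_zero_of_sum_ne_zero (hw.2.trans_ne one_ne_zero)
  exact ⟨v, mem_carrier.2 hv⟩

/-- The closed face of the standard simplex spanned by `s`. -/
def closedFace (s : Finset V) : Set (V → ℝ) :=
  {w ∈ stdSimplex ℝ V | carrier w ⊆ s}

/-- The open face of the standard simplex spanned by `s`. -/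
def openFace (s : Finset V) : Set (V → ℝ) :=
  {w ∈ stdSimplex ℝ V | carrier w = s}

/-- The union `|A|` of the open faces of the standard simplex spanned by the members of `A`. -/
def openRealization (A : Set (Finset V)) : Set (V → ℝ) :=
  {w ∈ stdSimplex ℝ V | carrier w ∈ A}

theorem openRealization_eq_biUnion (A : Set (Finset V)) :
    openRealization A = ⋃ s ∈ A, openFace s := by
  ext w
  simp [openRealization, openFace, and_comm]

theorem closedFace_eq_inter_pi (s : Finset V) :
    closedFace s = stdSimplex ℝ V ∩ (s : Set V)ᶜ.pi fun _ => {0} := by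
  ext w
  refine and_congr_right fun _ => forall_congr' fun v => ?_
  rw [mem_carrier, mem_singleton_iff, mem_compl_iff, Finset.mem_coe]
  exact not_imp_comm

theorem openFace_eq_inter_pi (s : Finset V) :
    openFace s = closedFace s ∩ (s : Set V).pi fun _ => Ioi 0 := by
  ext w
  constructor
  · rintro ⟨hw, rfl⟩
    exact ⟨⟨hw, Subset.rfl⟩, fun v hv => (hw.1 v).lt_of_ne' (mem_carrier.1 hv)⟩
  · rintro ⟨⟨hw, hws⟩, hpos⟩
    exact ⟨hw, hws.antisymm fun v hv => mem_carrier.2 (hpos v hv).ne'⟩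

theorem convex_closedFace (s : Finset V) : Convex ℝ (closedFace s) := by
  rw [closedFace_eq_inter_pi]
  exact (convex_stdSimplex ℝ V).inter (convex_pi fun _ _ => convex_singleton 0)

theorem convex_openFace (s : Finset V) : Convex ℝ (openFace s) := by
  rw [openFace_eq_inter_pi]
  exact (convex_closedFace s).inter (convex_pi fun _ _ => convex_Ioi 0)

theorem isCompact_closedFace (s : Finset V) : IsCompact (closedFace s) := by
  rw [closedFace_eq_inter_pi]
  exact (isCompact_stdSimplex ℝ V).inter_right (isClosed_set_pi fun _ _ => isClosed_singleton)

theorem closedFace_subset_openRealization (K : PreAbstractSimplicialComplex V) {s : Finset V}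
    (hs : s ∈ K.faces) : closedFace s ⊆ openRealization K.faces := fun _ hw =>
  ⟨hw.1, (K.isRelLowerSet_faces hs).2 hw.2 (carrier_nonempty hw.1)⟩

theorem openRealization_faces_eq_biUnion (K : PreAbstractSimplicialComplex V) :
    openRealization K.faces = ⋃ s ∈ K.faces, closedFace s :=
  Subset.antisymm (fun _ hw => mem_biUnion hw.2 ⟨hw.1, Subset.rfl⟩)
    (iUnion₂_subset fun _ => closedFace_subset_openRealization K)

theorem isCompact_openRealization_faces (K : PreAbstractSimplicialComplex V) :
    IsCompact (openRealization K.faces) := by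
  rw [openRealization_faces_eq_biUnion]
  exact (toFinite K.faces).isCompact_biUnion fun s _ => isCompact_closedFace s

theorem openRealization_mono {A A' : Set (Finset V)} (h : A ⊆ A') :
    openRealization A ⊆ openRealization A' := fun _ hw => ⟨hw.1, h hw.2⟩

end Carrier

section BarycentricSubdivision

variable {V : Type*} [Fintype V]

open Classical in
/-- The unnormalised barycentric coordinate of `w` at the barycentre of the face `s`. It is designed
to be nonzero exactly when `s` is a strict superlevel set `{v | c < w v}` with `c ≥ 0`, for
nonnegative `w`. -/
noncomputable def levelWeight (w : V → ℝ) (s : Finset V) : ℝ :=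
  (∏ v ∈ s, w v) * ∏ v ∈ s, ∏ u ∈ sᶜ, max 0 (w v - w u)

theorem continuous_levelWeight (s : Finset V) :
    Continuous fun w : V → ℝ => levelWeight w s := by
  unfold levelWeight
  fun_prop

theorem levelWeight_nonneg {w : V → ℝ} (hw : 0 ≤ w) (s : Finset V) : 0 ≤ levelWeight w s :=
  mul_nonneg (Finset.prod_nonneg fun v _ => hw v)
    (Finset.prod_nonneg fun _ _ => Finset.prod_nonneg fun _ _ => le_max_left _ _)

theorem levelWeight_ne_zero_iff {w : V → ℝ} {s : Finset V} :
    levelWeight w s ≠ 0 ↔ s ⊆ carrier w ∧ ∀ v ∈ s, ∀ u ∉ s, w u < w v := by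
  simp only [levelWeight, mul_ne_zero_iff, Finset.prod_ne_zero_iff, Finset.subset_iff, mem_carrier,
    Finset.mem_compl, ne_eq, max_eq_left_iff, sub_nonpos, not_le]

theorem levelWeight_carrier_ne_zero {w : V → ℝ} (hw : 0 ≤ w) : levelWeight w (carrier w) ≠ 0 := by
  refine levelWeight_ne_zero_iff.2 ⟨Subset.rfl, fun v hv u hu => ?_⟩
  rw [notMem_carrier.1 hu]
  exact (hw v).lt_of_ne' (mem_carrier.1 hv)

theorem subset_or_subset_of_levelWeight_ne_zero {w : V → ℝ} {s t : Finset V}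
    (hs : levelWeight w s ≠ 0) (ht : levelWeight w t ≠ 0) : s ⊆ t ∨ t ⊆ s := by
  by_contra! h
  obtain ⟨a, has, hat⟩ := Finset.not_subset.1 h.1
  obtain ⟨b, hbt, hbs⟩ := Finset.not_subset.1 h.2
  exact lt_asymm ((levelWeight_ne_zero_iff.1 hs).2 a has b hbs)
    ((levelWeight_ne_zero_iff.1 ht).2 b hbt a hat)

/-- The barycentric coordinates, with respect to the barycentres of the members of `A`, of the
projection of `w` to the order complex of `A`. -/
noncomputable def flagMap (A : Set (Finset V)) (w : V → ℝ) (s : Finset V) : ℝ :=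
  A.indicator (levelWeight w) s / ∑ t, A.indicator (levelWeight w) t

variable {A : Set (Finset V)}

theorem sum_indicator_levelWeight_pos {w : V → ℝ} (hw : w ∈ openRealization A) :
    0 < ∑ t, A.indicator (levelWeight w) t := by
  have hnonneg (s : Finset V) : 0 ≤ A.indicator (levelWeight w) s :=
    indicator_nonneg (fun s _ => levelWeight_nonneg hw.1.1 s) s
  refine Finset.sum_pos' (fun s _ => hnonneg s) ⟨carrier w, Finset.mem_univ _, ?_⟩
  exact (hnonneg _).lt_of_ne'
    (indicator_apply_ne_zero.2 ⟨hw.2, levelWeight_carrier_ne_zero hw.1.1⟩)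

theorem mem_carrier_flagMap {w : V → ℝ} (hw : w ∈ openRealization A) {s : Finset V} :
    s ∈ carrier (flagMap A w) ↔ s ∈ A ∧ levelWeight w s ≠ 0 := by
  rw [mem_carrier, flagMap, div_ne_zero_iff, indicator_apply_ne_zero, mem_inter_iff,
    Function.mem_support, and_iff_left (sum_indicator_levelWeight_pos hw).ne']

theorem flagMap_mem_openRealization {w : V → ℝ} (hw : w ∈ openRealization A) :
    flagMap A w ∈ openRealization (orderComplex A).faces := by
  have hpos := sum_indicator_levelWeight_pos hw
  have hstd : flagMap A w ∈ stdSimplex ℝ (Finset V) :=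
    ⟨fun s => div_nonneg (indicator_nonneg (fun s _ => levelWeight_nonneg hw.1.1 s) s) hpos.le,
      by simp only [flagMap, ← Finset.sum_div, div_self hpos.ne']⟩
  exact ⟨hstd, carrier_nonempty hstd, fun s hs => ((mem_carrier_flagMap hw).1 hs).1,
    fun s hs t ht _ => subset_or_subset_of_levelWeight_ne_zero
      ((mem_carrier_flagMap hw).1 hs).2 ((mem_carrier_flagMap hw).1 ht).2⟩

theorem isGreatest_carrier_flagMap {w : V → ℝ} (hw : w ∈ openRealization A) :
    IsGreatest (carrier (flagMap A w) : Set (Finset V)) (carrier w) :=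
  ⟨(mem_carrier_flagMap hw).2 ⟨hw.2, levelWeight_carrier_ne_zero hw.1.1⟩, fun _ hs =>
    (levelWeight_ne_zero_iff.1 ((mem_carrier_flagMap hw).1 hs).2).1⟩

theorem continuousOn_flagMap (A : Set (Finset V)) :
    ContinuousOn (flagMap A) (openRealization A) := by
  have hcont (s : Finset V) : Continuous fun w : V → ℝ => A.indicator (levelWeight w) s := by
    by_cases hs : s ∈ A
    · simpa only [indicator_of_mem hs] using continuous_levelWeight s
    · simpa only [indicator_of_notMem hs] using continuous_const
  exact continuousOn_pi.2 fun s => (hcont s).continuousOn.div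
    (continuous_finsetSum _ fun t _ => hcont t).continuousOn
    fun w hw => (sum_indicator_levelWeight_pos hw).ne'

/-- The linear map sending the vertex `s` of the barycentric subdivision to the barycentre of the
face `s`. -/
noncomputable def barycenterMap : (Finset V → ℝ) →ₗ[ℝ] (V → ℝ) :=
  Fintype.linearCombination ℝ fun s => s.centroidWeightsIndicator ℝ

theorem barycenterMap_apply (y : Finset V → ℝ) (v : V) :
    barycenterMap y v = ∑ s, y s * (s : Set V).indicator (fun _ => (s.card : ℝ)⁻¹) v := by
  simp only [barycenterMap, Fintype.linearCombination_apply, Finset.sum_apply, Pi.smul_apply,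
    smul_eq_mul, Finset.centroidWeightsIndicator_def]
  rfl

theorem mul_indicator_inv_card_nonneg {α : Type*} {y : Finset α → ℝ} (hy : 0 ≤ y) (v : α)
    (s : Finset α) : 0 ≤ y s * (s : Set α).indicator (fun _ => (s.card : ℝ)⁻¹) v :=
  mul_nonneg (hy s) (indicator_nonneg (fun _ _ => by positivity) v)

variable {y : Finset V → ℝ}

theorem mem_carrier_barycenterMap (hy : 0 ≤ y) {v : V} :
    v ∈ carrier (barycenterMap y) ↔ ∃ s ∈ carrier y, v ∈ s := by
  rw [mem_carrier, barycenterMap_apply,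
    Ne, Finset.sum_eq_zero_iff_of_nonneg fun s _ => mul_indicator_inv_card_nonneg hy v s]
  simp only [Finset.mem_univ, true_imp_iff, not_forall, ← ne_eq, mul_ne_zero_iff, mem_carrier,
    indicator_apply_ne_zero, mem_inter_iff, Finset.mem_coe, Function.mem_support]
  refine exists_congr fun s => and_congr_right fun _ => and_iff_left_of_imp fun hv => ?_
  exact inv_ne_zero (Nat.cast_ne_zero.2 (Finset.card_ne_zero_of_mem hv))

theorem carrier_barycenterMap_eq (hy : 0 ≤ y) {s : Finset V}
    (hs : IsGreatest (carrier y : Set (Finset V)) s) : carrier (barycenterMap y) = s := by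
  ext v
  rw [mem_carrier_barycenterMap hy]
  exact ⟨fun ⟨t, ht, hv⟩ => hs.2 ht hv, fun hv => ⟨s, hs.1, hv⟩⟩

theorem barycenterMap_mem_stdSimplex (hy : y ∈ stdSimplex ℝ (Finset V)) (hne : ∅ ∉ carrier y) :
    barycenterMap y ∈ stdSimplex ℝ V := by
  refine ⟨fun v => ?_, ?_⟩
  · rw [barycenterMap_apply]
    exact Finset.sum_nonneg fun s _ => mul_indicator_inv_card_nonneg hy.1 v s
  · simp only [barycenterMap, Fintype.linearCombination_apply, Finset.sum_apply, Pi.smul_apply]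
    rw [Finset.sum_comm, ← hy.2]
    refine Finset.sum_congr rfl fun s _ => ?_
    rw [← Finset.smul_sum, smul_eq_mul]
    rcases eq_or_ne (y s) 0 with hs | hs
    · rw [hs, zero_mul]
    · have hsne : s.Nonempty :=
        Finset.nonempty_iff_ne_empty.2 (ne_of_mem_of_not_mem (mem_carrier.2 hs) hne)
      rw [s.sum_centroidWeightsIndicator_eq_one_of_nonempty ℝ hsne, mul_one]

theorem barycenterMap_le_iff (hy : 0 ≤ y) (hc : IsChain (· ≤ ·) (carrier y : Set (Finset V)))
    {u v : V} : barycenterMap y u ≤ barycenterMap y v ↔ ∀ s ∈ carrier y, u ∈ s → v ∈ s := by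
  have term_le {a b : V} {s : Finset V} (h : s ∈ carrier y → a ∈ s → b ∈ s) :
      y s * (s : Set V).indicator (fun _ => (s.card : ℝ)⁻¹) a ≤
        y s * (s : Set V).indicator (fun _ => (s.card : ℝ)⁻¹) b := by
    by_cases hs : s ∈ carrier y
    · by_cases ha : a ∈ s
      · simp [ha, h hs ha]
      · simpa [ha] using mul_indicator_inv_card_nonneg hy b s
    · simp [notMem_carrier.1 hs]
  simp only [barycenterMap_apply]
  refine ⟨fun hle s hs hu => ?_, fun h => Finset.sum_le_sum fun s _ => term_le (h s)⟩
  by_contra hv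
  refine hle.not_gt (Finset.sum_lt_sum (fun t _ => term_le fun ht hvt => ?_)
    ⟨s, Finset.mem_univ s, ?_⟩)
  · exact ((hc.total hs ht).resolve_right fun hts => hv (hts hvt)) hu
  · have : 0 < y s := (hy s).lt_of_ne' (mem_carrier.1 hs)
    have := Finset.card_pos.2 ⟨u, hu⟩
    rw [indicator_of_notMem hv, indicator_of_mem (Finset.mem_coe.2 hu), mul_zero]
    positivity

theorem mem_carrier_of_levelWeight_barycenterMap_ne_zero (hy : 0 ≤ y)
    (hc : IsChain (· ≤ ·) (carrier y : Set (Finset V))) {s : Finset V} (hne : s.Nonempty)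
    (hs : levelWeight (barycenterMap y) s ≠ 0) : s ∈ carrier y := by
  obtain ⟨hsub, hlt⟩ := levelWeight_ne_zero_iff.1 hs
  obtain ⟨v, hv, hmin⟩ := s.exists_min_image (barycenterMap y) hne
  obtain ⟨t, ⟨ht, hvt⟩, hleast⟩ : ∃ t, IsLeast {r | r ∈ carrier y ∧ v ∈ r} t :=
    exists_isLeast_of_isChain (hc.mono fun _ h => h.1) (toFinite _)
      ((mem_carrier_barycenterMap hy).1 (hsub hv))
  suffices s = t from this ▸ ht
  ext u
  refine ⟨fun hu => (barycenterMap_le_iff hy hc).1 (hmin u hu) t ht hvt, fun hu => ?_⟩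
  by_contra hus
  have hle : barycenterMap y v ≤ barycenterMap y u :=
    (barycenterMap_le_iff hy hc).2 fun r hr hvr => hleast ⟨hr, hvr⟩ hu
  exact hle.not_gt (hlt v hv u hus)

theorem barycenterMap_mem_openRealization (hA : ∅ ∉ A)
    (hy : y ∈ openRealization (orderComplex A).faces) : barycenterMap y ∈ openRealization A := by
  obtain ⟨hstd, hne, hsub, hc⟩ := hy
  obtain ⟨s, hs⟩ := exists_isGreatest_of_isChain hc (toFinite _) hne
  refine ⟨barycenterMap_mem_stdSimplex hstd fun h => hA (hsub h), ?_⟩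
  rw [carrier_barycenterMap_eq hstd.1 hs]
  exact hsub hs.1

theorem carrier_barycenterMap_flagMap {w : V → ℝ} (hw : w ∈ openRealization A) :
    carrier (barycenterMap (flagMap A w)) = carrier w :=
  carrier_barycenterMap_eq (flagMap_mem_openRealization hw).1.1 (isGreatest_carrier_flagMap hw)

theorem carrier_flagMap_barycenterMap_subset (hA : ∅ ∉ A)
    (hy : y ∈ openRealization (orderComplex A).faces) :
    carrier (flagMap A (barycenterMap y)) ⊆ carrier y := by
  intro s hs
  obtain ⟨hsA, hs⟩ := (mem_carrier_flagMap (barycenterMap_mem_openRealization hA hy)).1 hs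
  have hne : s.Nonempty := Finset.nonempty_iff_ne_empty.2 (ne_of_mem_of_not_mem hsA hA)
  exact mem_carrier_of_levelWeight_barycenterMap_ne_zero hy.1.1 hy.2.2.2 hne hs

theorem nonempty_homotopyEquiv_openRealization_orderComplex (hA : ∅ ∉ A) :
    Nonempty (ContinuousMap.HomotopyEquiv (openRealization A)
      (openRealization (orderComplex A).faces)) := by
  let f : C(openRealization A, openRealization (orderComplex A).faces) :=
    ⟨fun w => ⟨flagMap A w, flagMap_mem_openRealization w.2⟩,
      (continuousOn_iff_continuous_domRestrict.1 (continuousOn_flagMap A)).subtype_mk _⟩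
  let g : C(openRealization (orderComplex A).faces, openRealization A) :=
    ⟨fun y => ⟨barycenterMap y, barycenterMap_mem_openRealization hA y.2⟩,
      (barycenterMap.continuous_on_pi.comp continuous_subtype_val).subtype_mk _⟩
  refine ⟨⟨f, g, homotopic_of_segment_subset _ _ fun w => ?_,
    homotopic_of_segment_subset _ _ fun y => ?_⟩⟩
  · have hgf : barycenterMap (flagMap A w) ∈ openFace (carrier (w : V → ℝ)) :=
      ⟨(g (f w)).2.1, carrier_barycenterMap_flagMap w.2⟩
    refine ((convex_openFace _).segment_subset hgf ⟨w.2.1, rfl⟩).trans fun x hx => ?_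
    exact ⟨hx.1, hx.2 ▸ w.2.2⟩
  · have hfg : flagMap A (barycenterMap y) ∈ closedFace (carrier (y : Finset V → ℝ)) :=
      ⟨(f (g y)).2.1, carrier_flagMap_barycenterMap_subset hA y.2⟩
    exact ((convex_closedFace _).segment_subset hfg ⟨y.2.1, Subset.rfl⟩).trans
      (closedFace_subset_openRealization _ y.2.2)

end BarycentricSubdivision

section IntrinsicInterior

theorem intrinsicInterior_eq_interior {E : Type*} [NormedAddCommGroup E] [NormedSpace ℝ E]
    {s : Set E} (hs : affineSpan ℝ s = ⊤) : intrinsicInterior ℝ s = interior s := by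
  refine Subset.antisymm ?_ interior_subset_intrinsicInterior
  have hopen : IsOpen (affineSpan ℝ s : Set E) := by
    rw [hs]
    exact isOpen_univ
  refine (hopen.isOpenEmbedding_subtypeVal.isOpenMap.image_interior_subset _).trans ?_
  exact interior_mono (image_preimage_subset _ _)

variable {ι E : Type*} [NormedAddCommGroup E] [NormedSpace ℝ E]

theorem exists_affineBasis_comp_eq [Finite ι] [Nonempty ι] {q : ι → E}
    (hq : AffineIndependent ℝ q) :
    ∃ (D : Submodule ℝ E) (b : AffineBasis ι ℝ D) (φ : D →ᵃⁱ[ℝ] E), φ ∘ b = q := by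
  have := Fintype.ofFinite ι
  let i₀ := Classical.arbitrary ι
  let φ : vectorSpan ℝ (range q) →ᵃⁱ[ℝ] E :=
    (AffineIsometryEquiv.vaddConst ℝ (q i₀)).toAffineIsometry.comp
      (vectorSpan ℝ (range q)).subtypeₗᵢ.toAffineIsometry
  let b (i : ι) : vectorSpan ℝ (range q) :=
    ⟨q i -ᵥ q i₀, vsub_mem_vectorSpan ℝ (mem_range_self i) (mem_range_self i₀)⟩
  have hφ : φ ∘ b = q := funext fun i => vsub_vadd (q i) (q i₀)
  have hb : AffineIndependent ℝ b :=
    AffineIndependent.of_comp φ.toAffineMap (by rwa [φ.coe_toAffineMap, hφ])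
  exact ⟨_, ⟨b, hb, hb.affineSpan_eq_top_iff_card_eq_finrank_add_one.2
    hq.finrank_vectorSpan_add_one.symm⟩, φ, hφ⟩

variable [Fintype ι]

theorem linearCombination_eq_affineCombination {k F : Type*} [Ring k] [AddCommGroup F] [Module k F]
    (q : ι → F) {w : ι → k} (hw : ∑ i, w i = 1) :
    Fintype.linearCombination k q w = Finset.univ.affineCombination k q w :=
  (Finset.univ.affineCombination_eq_linear_combination q w hw).symm

theorem interior_convexHull_range_affineBasis (b : AffineBasis ι ℝ E) :
    interior (convexHull ℝ (range b)) =
      Fintype.linearCombination ℝ b '' {w ∈ stdSimplex ℝ ι | ∀ i, 0 < w i} := by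
  rw [b.interior_convexHull]
  ext x
  constructor
  · intro hx
    exact ⟨fun i => b.coord i x, ⟨⟨fun i => (hx i).le, b.sum_coord_apply_eq_one x⟩, hx⟩,
      b.linear_combination_coord_eq_self x⟩
  · rintro ⟨w, ⟨hw, hpos⟩, rfl⟩ i
    rw [linearCombination_eq_affineCombination _ hw.2,
      b.coord_apply_combination_of_mem (Finset.mem_univ i) hw.2]
    exact hpos i

theorem intrinsicInterior_convexHull_range {q : ι → E} (hq : AffineIndependent ℝ q) :
    intrinsicInterior ℝ (convexHull ℝ (range q)) =
      Fintype.linearCombination ℝ q '' {w ∈ stdSimplex ℝ ι | ∀ i, 0 < w i} := by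
  rcases isEmpty_or_nonempty ι with _ | _
  · simp [range_eq_empty, stdSimplex_of_isEmpty_index]
  obtain ⟨D, b, φ, rfl⟩ := exists_affineBasis_comp_eq hq
  have hspan : affineSpan ℝ (convexHull ℝ (range b)) = ⊤ := by
    rw [affineSpan_convexHull, b.tot]
  calc intrinsicInterior ℝ (convexHull ℝ (range (φ ∘ b)))
      = intrinsicInterior ℝ (φ '' convexHull ℝ (range b)) := by
        rw [range_comp, ← φ.coe_toAffineMap, φ.toAffineMap.image_convexHull]
    _ = φ '' (Fintype.linearCombination ℝ b '' {w ∈ stdSimplex ℝ ι | ∀ i, 0 < w i}) := by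
        rw [φ.intrinsicInterior_image, intrinsicInterior_eq_interior hspan,
          interior_convexHull_range_affineBasis]
    _ = Fintype.linearCombination ℝ (φ ∘ b) '' {w ∈ stdSimplex ℝ ι | ∀ i, 0 < w i} := by
        rw [image_image]
        refine image_congr fun w hw => ?_
        rw [linearCombination_eq_affineCombination _ hw.1.2,
          linearCombination_eq_affineCombination _ hw.1.2]
        exact Finset.univ.map_affineCombination b w hw.1.2 φ.toAffineMap

end IntrinsicInterior

section LinearRealization

variable {V F : Type*} [Fintype V] [AddCommGroup F] [Module ℝ F]

theorem exists_carrier_subset_restrict_eq (s : Finset V) (u : s → ℝ) :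
    ∃ w : V → ℝ, carrier w ⊆ s ∧ s.restrict w = u := by
  refine ⟨Function.extend Subtype.val u 0, fun v hv => ?_,
    funext fun v => Subtype.val_injective.extend_apply u 0 v⟩
  by_contra hvs
  exact mem_carrier.1 hv (Function.extend_apply' u (0 : V → ℝ) v fun ⟨a, ha⟩ => hvs (ha ▸ a.2))

theorem eq_of_restrict_eq {s : Finset V} {w u : V → ℝ} (hw : carrier w ⊆ s) (hu : carrier u ⊆ s)
    (h : s.restrict w = s.restrict u) : w = u := by
  ext v
  by_cases hv : v ∈ s
  · exact congrFun h ⟨v, hv⟩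
  · rw [notMem_carrier.1 fun h => hv (hw h), notMem_carrier.1 fun h => hv (hu h)]

theorem linearCombination_restrict {s : Finset V} {w : V → ℝ} (hw : carrier w ⊆ s) (p : V → F) :
    Fintype.linearCombination ℝ (s.restrict p) (s.restrict w) = Fintype.linearCombination ℝ p w :=
  (s.sum_coe_sort fun v => w v • p v).trans <| Finset.sum_subset s.subset_univ fun v _ hv => by
    rw [notMem_carrier.1 fun h => hv (hw h), zero_smul]

theorem restrict_mem_stdSimplex_iff {s : Finset V} {w : V → ℝ} (hw : carrier w ⊆ s) :
    s.restrict w ∈ stdSimplex ℝ s ↔ w ∈ stdSimplex ℝ V := by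
  have hsum : ∑ v, s.restrict w v = ∑ v, w v :=
    (s.sum_coe_sort w).trans <| Finset.sum_subset s.subset_univ fun v _ hv =>
      notMem_carrier.1 fun h => hv (hw h)
  refine and_congr ⟨fun h v => ?_, fun h v => h v⟩ (by rw [hsum])
  by_cases hv : v ∈ s
  · exact h ⟨v, hv⟩
  · exact (notMem_carrier.1 fun h => hv (hw h)).ge

theorem closedFace_eq_restrict_preimage (s : Finset V) :
    closedFace s = {w | carrier w ⊆ s ∧ s.restrict w ∈ stdSimplex ℝ s} := by
  ext w
  exact and_comm.trans (and_congr_right fun hw => (restrict_mem_stdSimplex_iff hw).symm)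

theorem openFace_eq_restrict_preimage (s : Finset V) :
    openFace s =
      {w | carrier w ⊆ s ∧ s.restrict w ∈ {u ∈ stdSimplex ℝ s | ∀ v, 0 < u v}} := by
  rw [openFace_eq_inter_pi, closedFace_eq_restrict_preimage]
  ext w
  exact and_assoc.trans <| and_congr_right' <| and_congr_right'
    ⟨fun h v => h v v.2, fun h v hv => h ⟨v, hv⟩⟩

theorem image_linearCombination_restrict (p : V → F) (s : Finset V) (S : Set (s → ℝ)) :
    Fintype.linearCombination ℝ (s.restrict p) '' S =
      Fintype.linearCombination ℝ p '' {w | carrier w ⊆ s ∧ s.restrict w ∈ S} := by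
  ext x
  constructor
  · rintro ⟨u, hu, rfl⟩
    obtain ⟨w, hw, rfl⟩ := exists_carrier_subset_restrict_eq s u
    exact ⟨w, ⟨hw, hu⟩, (linearCombination_restrict hw p).symm⟩
  · rintro ⟨w, ⟨hw, hS⟩, rfl⟩
    exact ⟨s.restrict w, hS, linearCombination_restrict hw p⟩

theorem image_linearCombination_closedFace (p : V → F) (s : Finset V) :
    Fintype.linearCombination ℝ p '' closedFace s = convexHull ℝ (p '' s) := by
  classical
  rw [closedFace_eq_restrict_preimage, ← image_linearCombination_restrict,
    ← convexHull_rangle_single_eq_stdSimplex, LinearMap.image_convexHull, ← range_comp,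
    image_eq_range]
  refine congrArg (fun f => convexHull ℝ (range f)) (funext fun v => ?_)
  exact (Fintype.linearCombination_apply_single ℝ _ v 1).trans (one_smul ℝ _)

theorem image_linearCombination_openFace {E : Type*} [NormedAddCommGroup E] [NormedSpace ℝ E]
    {p : V → E} {s : Finset V} (hs : AffineIndependent ℝ (s.restrict p)) :
    Fintype.linearCombination ℝ p '' openFace s =
      intrinsicInterior ℝ (convexHull ℝ (p '' s)) := by
  rw [openFace_eq_restrict_preimage, ← image_linearCombination_restrict,
    ← intrinsicInterior_convexHull_range hs, image_eq_range]
  rfl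

theorem injOn_linearCombination_closedFace {p : V → F} {s : Finset V}
    (hs : AffineIndependent ℝ (s.restrict p)) :
    InjOn (Fintype.linearCombination ℝ p) (closedFace s) := by
  rw [closedFace_eq_restrict_preimage]
  rintro w ⟨hws, hw⟩ u ⟨hus, hu⟩ h
  refine eq_of_restrict_eq hws hus (hs.injOn_affineCombination_fintypeAffineCoords
    (mem_fintypeAffineCoords_iff_sum.2 hw.2) (mem_fintypeAffineCoords_iff_sum.2 hu.2) ?_)
  rwa [← linearCombination_eq_affineCombination _ hw.2,
    ← linearCombination_eq_affineCombination _ hu.2, linearCombination_restrict hws,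
    linearCombination_restrict hus]

end LinearRealization

section VertexEmbedding

theorem biUnion_preimage_of_subset_range {α β γ : Type*} {f : α → β} {A : Set β}
    (hA : A ⊆ range f) (g : β → Set γ) : ⋃ a ∈ f ⁻¹' A, g (f a) = ⋃ b ∈ A, g b := by
  rw [← biUnion_image, image_preimage_eq_of_subset hA]

theorem nonempty_homeomorph_image_of_isCompact {X Y : Type*} [TopologicalSpace X]
    [TopologicalSpace Y] [T2Space Y] {f : X → Y} {K A : Set X} (hK : IsCompact K)
    (hf : ContinuousOn f K) (hinj : InjOn f K) (hAK : A ⊆ K) : Nonempty (A ≃ₜ f '' A) := by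
  have := isCompact_iff_compactSpace.1 hK
  have hemb : Topology.IsEmbedding (K.domRestrict f) :=
    (hf.domRestrict.isClosedEmbedding hinj.injective).isEmbedding
  exact ⟨(hemb.comp (.inclusion hAK)).toHomeomorph.trans
    (Homeomorph.setCongr (range_domRestrict f A))⟩

/-- The abstract simplicial complex on `α` whose faces are the finite sets of vertices mapped by `f`
to a face of `K`. -/
def pullbackComplex {α β : Type*} (K : PreAbstractSimplicialComplex β) (f : α ↪ β) :
    PreAbstractSimplicialComplex α where
  faces := Finset.map f ⁻¹' K.faces
  isRelLowerSet_faces := fun _ hs =>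
    ⟨Finset.map_nonempty.1 (K.isRelLowerSet_faces hs).1, fun _ ht hne =>
      (K.isRelLowerSet_faces hs).2 (Finset.map_subset_map.2 ht) hne.map⟩

variable {V F : Type*} [AddCommGroup F] [Module ℝ F]

open Classical in
/-- The geometric simplicial complex obtained from an abstract one by placing its vertices at
affinely independent points. -/
noncomputable def realization (K : PreAbstractSimplicialComplex V) {p : V ↪ F}
    (hp : AffineIndependent ℝ p) : SimplicialComplex ℝ F :=
  SimplicialComplex.ofAffineIndependent (K.map p) <| hp.range.mono <| by
    refine iUnion₂_subset ?_
    rintro _ ⟨s, -, rfl⟩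
    rw [Finset.coe_image]
    exact image_subset_range _ _

theorem faces_realization (K : PreAbstractSimplicialComplex V) {p : V ↪ F}
    (hp : AffineIndependent ℝ p) : (realization K hp).faces = Finset.map p '' K.faces := by
  classical
  exact image_congr fun s _ => (s.map_eq_image p).symm

theorem affineIndependent_restrict_iff {p : V ↪ F} {s : Finset V} :
    AffineIndependent ℝ (s.restrict p) ↔ AffineIndependent ℝ ((↑) : s.map p → F) :=
  affineIndependent_equiv (s.equivMap p) (p := ((↑) : s.map p → F))

variable [Fintype V]

theorem injOn_linearCombination_openRealization (B : SimplicialComplex ℝ F) (p : V ↪ F) :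
    InjOn (Fintype.linearCombination ℝ p) (openRealization (Finset.map p ⁻¹' B.faces)) := by
  classical
  intro w hw u hu h
  have hmem {x : V → ℝ} (hx : x ∈ stdSimplex ℝ V) :
      Fintype.linearCombination ℝ p x ∈ convexHull ℝ ((carrier x).map p : Set F) := by
    rw [Finset.coe_map, ← image_linearCombination_closedFace]
    exact mem_image_of_mem _ ⟨hx, Subset.rfl⟩
  have hinter : Fintype.linearCombination ℝ p w ∈
      Fintype.linearCombination ℝ p '' closedFace (carrier w ∩ carrier u) := by
    rw [image_linearCombination_closedFace, ← Finset.coe_map, Finset.map_inter, Finset.coe_inter]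
    exact B.inter_subset_convexHull hw.2 hu.2 ⟨hmem hw.1, h ▸ hmem hu.1⟩
  obtain ⟨z, ⟨hz, hzwu⟩, hzw⟩ := hinter
  have eq_of_image_eq {x : V → ℝ} (hx : x ∈ openRealization (Finset.map p ⁻¹' B.faces))
      (hzx : carrier z ⊆ carrier x)
      (h : Fintype.linearCombination ℝ p z = Fintype.linearCombination ℝ p x) : z = x :=
    injOn_linearCombination_closedFace (affineIndependent_restrict_iff.2 (B.indep hx.2))
      ⟨hz, hzx⟩ ⟨hx.1, Subset.rfl⟩ h
  exact (eq_of_image_eq hw (hzwu.trans Finset.inter_subset_left) hzw).symm.trans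
    (eq_of_image_eq hu (hzwu.trans Finset.inter_subset_right) (hzw.trans h))

theorem nonempty_homeomorph_image_openRealization [TopologicalSpace F] [IsTopologicalAddGroup F]
    [ContinuousSMul ℝ F] [T2Space F] (B : SimplicialComplex ℝ F) (p : V ↪ F) {A : Set (Finset V)}
    (hA : A ⊆ Finset.map p ⁻¹' B.faces) :
    Nonempty (openRealization A ≃ₜ Fintype.linearCombination ℝ p '' openRealization A) :=
  nonempty_homeomorph_image_of_isCompact
    (isCompact_openRealization_faces (pullbackComplex B.toPreAbstractSimplicialComplex p))
    (Fintype.linearCombination ℝ p).continuous_on_pi.continuousOn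
    (injOn_linearCombination_openRealization B p) (openRealization_mono hA)

theorem image_linearCombination_openRealization_faces {B : SimplicialComplex ℝ F} {p : V ↪ F}
    (hp : B.faces ⊆ range (Finset.map p)) :
    Fintype.linearCombination ℝ p '' openRealization (Finset.map p ⁻¹' B.faces) = B.space := by
  change Fintype.linearCombination ℝ p ''
    openRealization (pullbackComplex B.toPreAbstractSimplicialComplex p).faces = _
  simp only [openRealization_faces_eq_biUnion, image_iUnion₂, image_linearCombination_closedFace,
    ← Finset.coe_map]
  exact biUnion_preimage_of_subset_range hp fun s => convexHull ℝ (s : Set F)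

theorem image_linearCombination_openRealization {E : Type*} [NormedAddCommGroup E]
    [NormedSpace ℝ E] {A : Set (Finset E)}
    (hA : ∀ s ∈ A, AffineIndependent ℝ ((↑) : s → E)) {p : V ↪ E}
    (hp : A ⊆ range (Finset.map p)) :
    Fintype.linearCombination ℝ p '' openRealization (Finset.map p ⁻¹' A) =
      ⋃ s ∈ A, intrinsicInterior ℝ (convexHull ℝ (s : Set E)) := by
  rw [openRealization_eq_biUnion, image_iUnion₂, ← biUnion_preimage_of_subset_range hp]
  refine iUnion₂_congr fun s hs => ?_
  rw [Finset.coe_map, image_linearCombination_openFace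
    (affineIndependent_restrict_iff.2 (hA _ hs))]

theorem nonempty_homeomorph_space_realization [TopologicalSpace F] [IsTopologicalAddGroup F]
    [ContinuousSMul ℝ F] [T2Space F] (K : PreAbstractSimplicialComplex V) {p : V ↪ F}
    (hp : AffineIndependent ℝ p) :
    Nonempty (openRealization K.faces ≃ₜ (realization K hp).space) := by
  have hfaces : Finset.map p ⁻¹' (realization K hp).faces = K.faces := by
    rw [faces_realization, preimage_image_eq _ (Finset.map_injective p)]
  obtain ⟨e⟩ := nonempty_homeomorph_image_openRealization (realization K hp) p hfaces.ge
  refine ⟨e.trans (Homeomorph.setCongr ?_)⟩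
  rw [← hfaces, image_linearCombination_openRealization_faces]
  exact faces_realization K hp ▸ image_subset_range _ _

end VertexEmbedding

theorem card_le_of_mem_orderComplex_preimage_map {α β : Type*} {A : Set (Finset β)} {d : ℕ}
    (hchain : ∀ c : Finset (Finset β), (c : Set (Finset β)) ⊆ A →
      IsChain (· ⊆ ·) (c : Set (Finset β)) → c.card ≤ d) (f : α ↪ β) {c : Finset (Finset α)}
    (hc : c ∈ (orderComplex (Finset.map f ⁻¹' A)).faces) : c.card ≤ d := by
  obtain ⟨-, hcA, hc⟩ := hc
  rw [← Finset.card_map (Finset.mapEmbedding f).toEmbedding]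
  refine hchain _ ?_ ?_ <;> rw [Finset.coe_map]
  · exact image_subset_iff.2 hcA
  · exact hc.image (Finset.mapEmbedding f)

theorem exists_affineIndependent_embedding (V : Type*) [Finite V] :
    ∃ (n : ℕ) (p : V ↪ EuclideanSpace ℝ (Fin n)), AffineIndependent ℝ p := by
  obtain ⟨n, ⟨e⟩⟩ := Finite.exists_equiv_fin V
  have h := (EuclideanSpace.basisFun (Fin n) ℝ).toBasis.linearIndependent.affineIndependent
  exact ⟨n, e.toEmbedding.trans ⟨_, h.injective⟩, h.comp_embedding e.toEmbedding⟩

theorem union_open_simplices_homotopy_type_general {E : Type*} [NormedAddCommGroup E]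
    [NormedSpace ℝ E] (B : SimplicialComplex ℝ E) {A : Set (Finset E)} (hAB : A ⊆ B.faces)
    (hA : A.Finite) {d : ℕ}
    (hchain : ∀ c : Finset (Finset E), (c : Set (Finset E)) ⊆ A →
      IsChain (· ⊆ ·) (c : Set (Finset E)) → c.card ≤ d) :
    ∃ (n : ℕ) (L : SimplicialComplex ℝ (EuclideanSpace ℝ (Fin n))),
      L.faces.Finite ∧ (∀ t ∈ L.faces, t.card ≤ d) ∧
      Nonempty (ContinuousMap.HomotopyEquiv
        (⋃ s ∈ A, intrinsicInterior ℝ (convexHull ℝ (s : Set E)) : Set E) L.space) := by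
  classical
  let p : hA.toFinset.biUnion id ↪ E := Function.Embedding.subtype _
  let A' : Set (Finset (hA.toFinset.biUnion id)) := Finset.map p ⁻¹' A
  have hp : A ⊆ range (Finset.map p) := fun s hs => ⟨s.subtype _, Finset.subtype_map_of_mem
    fun x hx => Finset.mem_biUnion.2 ⟨s, hA.mem_toFinset.2 hs, hx⟩⟩
  have hA' : ∅ ∉ A' := fun h => B.empty_notMem (hAB h)
  obtain ⟨n, q, hq⟩ := exists_affineIndependent_embedding (Finset (hA.toFinset.biUnion id))
  obtain ⟨e₁⟩ := nonempty_homeomorph_image_openRealization B p (preimage_mono hAB)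
  rw [image_linearCombination_openRealization (fun s hs => B.indep (hAB hs)) hp] at e₁
  obtain ⟨e₂⟩ := nonempty_homotopyEquiv_openRealization_orderComplex hA'
  obtain ⟨e₃⟩ := nonempty_homeomorph_space_realization (orderComplex A') hq
  refine ⟨n, realization (orderComplex A') hq, ?_, ?_,
    ⟨(e₁.symm.toHomotopyEquiv.trans e₂).trans e₃.toHomotopyEquiv⟩⟩ <;> rw [faces_realization]
  · exact toFinite _
  · rintro _ ⟨c, hc, rfl⟩
    rw [Finset.card_map]
    exact card_le_of_mem_orderComplex_preimage_map hchain p hc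

/-- Let `B` be a finite simplicial complex and `A` a nonempty set of simplices of `B`,
each of dimension `≤ m`.  Then the union `|A|` of the corresponding open simplices is
homotopy equivalent to a finite (simplicial, hence CW) complex of dimension `≤ m`. -/
theorem union_open_simplices_homotopy_type
    {N m : ℕ} (B : SimplicialComplex ℝ (EuclideanSpace ℝ (Fin N)))
    (hfin : B.faces.Finite)
    (A : Set (Finset (EuclideanSpace ℝ (Fin N))))
    (hAB : A ⊆ B.faces) (hAne : A.Nonempty)
    (hdim : ∀ s ∈ A, s.card ≤ m + 1) :
    ∃ (N' : ℕ) (L : SimplicialComplex ℝ (EuclideanSpace ℝ (Fin N'))),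
      L.faces.Finite ∧
      (∀ t ∈ L.faces, t.card ≤ m + 1) ∧
      Nonempty (ContinuousMap.HomotopyEquiv
        (⋃ s ∈ A,
          intrinsicInterior ℝ (convexHull ℝ (s : Set (EuclideanSpace ℝ (Fin N)))) :
          Set (EuclideanSpace ℝ (Fin N)))
        L.space) :=
  union_open_simplices_homotopy_type_general B hAB (hfin.subset hAB) fun _ hcA hc =>
    card_le_of_isChain hc (fun _ hs => B.nonempty_of_mem_faces (hAB (hcA hs)))
      fun s hs => hdim s (hcA hs)
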